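/- There exist absolute constants c > 0 and C > 0 such that for every integer N ≥ 1 and every real λ > 0 for which λN² is a positive integer, one has c·e^{(2 + log λ)·N}/(λN²) ≤ p_N(λN²) ≤ C·e^{2π·√(λ/6)·N}/(λN²). -/

import Mathlib

/-!
Since `λ N² = n`, the two bounds read `e^{2N} n^{N-1} / N^{2N} ≪ p_N(n) ≪ e^{2π√(n/6)} / n`.

For the lower bound, `n` has `(n+N-1).choose (N-1) ≥ n^{N-1} / (N-1)!` weak compositions into `N`
parts, and at most `N!` of them give the same partition (`choose_le_factorial_mul_pN`). Hence
`p_N(n) ≥ n^{N-1} N / N!²`, and Stirling's inequality (`factorial_sq_le`) concludes.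

For the upper bound, `p_N(n)` is at most the number of all partitions of `n`, the coefficient of
`zⁿ` in `F(z) = ∏ (1 - z^i)⁻¹`, where `i` runs over `1, …, K` for some `K ≥ n`. Integrating over the
circle `|z| = q = e^{-t}` gives `2π p_N(n) qⁿ ≤ ∫ |F(q e^{iθ})| dθ` (`pN_le_integral`). Three
estimates are combined.

* `prod_inv_le`: `F(q) ≤ √(1-q) e^{π²/(6t)}`.
* `norm_inv_one_sub_le`: `|1 - w|⁻¹ ≤ (1 - |w|)⁻¹ e^{Re w - |w|}`. Multiplied over `w = z^i`, this
  bounds `|F(z)| / F(q)` by `exp (Re (z/(1-z)) - q/(1-q))`, up to a truncation error which is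
  harmless for large `K`.
* `exponent_le` and `integral_majorant_le`: that exponential is dominated by a Gaussian of width
  `(1-q)^{3/2}` plus a negligible constant, so its integral is `O((1-q)^{3/2})`.

Together they give `p_N(n) ≪ (1-q)² e^{nt + π²/(6t)} ≤ t² e^{nt + π²/(6t)}`; the choice
`t = π/√(6n)` minimises the exponent, which becomes `2π√(n/6)`, while `t² = π²/(6n)`.
-/


open Finset

noncomputable section

/-- Number of partitions of `n` into at most `N` parts. -/
def pN (N n : ℕ) : ℕ :=
  Finset.card (Finset.univ.filter fun p : n.Partition => p.parts.card ≤ N)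

/-! ### Lower bound: weak compositions and Stirling -/

lemma multiset_eq_of_filter_ne_zero {s t : Multiset ℕ} (hc : s.card = t.card)
    (h : s.filter (· ≠ 0) = t.filter (· ≠ 0)) : s = t := by
  have key : ∀ u : Multiset ℕ,
      u.filter (· ≠ 0) + Multiset.replicate (u.card - (u.filter (· ≠ 0)).card) 0 = u := by
    intro u
    have h1 := Multiset.filter_add_not (· ≠ 0) u
    have h2 : u.filter (fun a => ¬ a ≠ 0) =
        Multiset.replicate (u.filter (fun a => ¬ a ≠ 0)).card 0 := by
      rw [Multiset.eq_replicate_card]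
      intro b hb
      simpa using (Multiset.mem_filter.1 hb).2
    have h3 := congrArg Multiset.card h1
    rw [Multiset.card_add] at h3
    conv_rhs => rw [← h1, h2]
    congr 2
    omega
  rw [← key s, ← key t, h, hc]

/-- Forgetting the order (and the zeros) of a weak composition of `n` into `N` parts gives a
partition of `n` into at most `N` parts, and each partition arises from at most `N!` weak
compositions, since these are rearrangements of a single list of length `N`. -/
lemma choose_le_factorial_mul_pN (N n : ℕ) : (N + n - 1).choose n ≤ N.factorial * pN N n := by
  classical
  have hsum : ∀ f ∈ (univ : Finset (Fin N)).finsuppAntidiag n,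
      (univ.val.map (fun i => f i)).sum = n := fun f hf => (mem_finsuppAntidiag.1 hf).1
  let φ : (Fin N →₀ ℕ) → n.Partition := fun f =>
    if h : (univ.val.map (fun i => f i)).sum = n then Nat.Partition.ofSums n _ h
    else Nat.Partition.indiscrete n
  have hφ : ∀ f ∈ (univ : Finset (Fin N)).finsuppAntidiag n,
      (φ f).parts = (univ.val.map (fun i => f i)).filter (· ≠ 0) := by
    intro f hf
    simp only [φ, dif_pos (hsum f hf)]
    rfl
  have hcard : ((univ : Finset (Fin N)).finsuppAntidiag n).card = (N + n - 1).choose n := by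
    rw [Finset.card_finsuppAntidiag_nat_eq_choose]; simp
  rw [← hcard, mul_comm, pN, mul_comm]
  refine Finset.card_le_mul_card_image_of_maps_to (f := φ) ?_ _ ?_
  · intro f hf
    simp only [mem_filter, mem_univ, true_and, hφ f hf]
    refine (Multiset.card_le_card (Multiset.filter_le _ _)).trans ?_
    simp
  · intro p _
    rcases ((univ.finsuppAntidiag n).filter fun f => φ f = p).eq_empty_or_nonempty with he | ⟨g, hg⟩
    · rw [he]; simp
    rw [mem_filter] at hg
    have hl : (List.ofFn g).permutations.toFinset.card ≤ N.factorial := by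
      refine (List.toFinset_card_le _).trans ?_
      rw [List.length_permutations, List.length_ofFn]
    refine le_trans ?_ hl
    refine Finset.card_le_card_of_injOn (fun f => List.ofFn f) ?_ ?_
    · intro f hf
      rw [mem_coe, mem_filter] at hf
      rw [mem_coe, List.mem_toFinset, List.mem_permutations, ← Multiset.coe_eq_coe]
      have : univ.val.map (fun i => f i) = univ.val.map (fun i => g i) := by
        apply multiset_eq_of_filter_ne_zero (by simp)
        rw [← hφ f hf.1, ← hφ g hg.1, hf.2, hg.2]
      simpa [Fin.univ_val_map] using this
    · intro f _ g _ h
      exact DFunLike.coe_injective (List.ofFn_injective h)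

/-- Stirling's upper bound `N! ≤ e √N (N/e)^N`, squared. -/
lemma factorial_sq_le (N : ℕ) (hN : 1 ≤ N) :
    ((N.factorial : ℝ)) ^ 2 ≤ Real.exp 2 * N * ((N : ℝ) ^ N / Real.exp N) ^ 2 := by
  obtain ⟨m, rfl⟩ : ∃ m, N = m + 1 := ⟨N - 1, by omega⟩
  have h := Stirling.stirlingSeq'_antitone (Nat.zero_le m)
  simp only [Function.comp, Nat.succ_eq_add_one, zero_add, Stirling.stirlingSeq_one] at h
  unfold Stirling.stirlingSeq at h
  set N := m + 1
  have hN0 : (0 : ℝ) < N := by positivity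
  rw [div_le_iff₀ (by positivity)] at h
  have h2 := pow_le_pow_left₀ (by positivity) h 2
  refine h2.trans (le_of_eq ?_)
  rw [mul_pow, mul_pow, div_pow, Real.sq_sqrt (by norm_num), Real.sq_sqrt (by positivity), div_pow,
    ← Real.exp_nat_mul, ← Real.exp_nat_mul]
  norm_num
  ring

lemma pN_lower (N : ℕ) (hN : 1 ≤ N) (n : ℕ) (hn : 0 < n) :
    (n : ℝ) ^ (N - 1) * N ≤ (N.factorial : ℝ) ^ 2 * pN N n := by
  have h1 := choose_le_factorial_mul_pN N n
  obtain ⟨m, rfl⟩ : ∃ m, N = m + 1 := ⟨N - 1, by omega⟩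
  have h2 : (m + 1 + n - 1).choose n = (n + m).choose m := by
    rw [show m + 1 + n - 1 = n + m by omega, Nat.choose_symm_add]
  rw [h2] at h1
  have h3 : n ^ m ≤ m.factorial * (n + m).choose m := by
    rw [← Nat.ascFactorial_eq_factorial_mul_choose]
    exact (Nat.pow_le_pow_left (Nat.le_succ n) m).trans (Nat.pow_succ_le_ascFactorial _ _)
  have h4 : n ^ m * (m + 1) ≤ (m + 1).factorial ^ 2 * pN (m + 1) n := by
    calc n ^ m * (m + 1) ≤ m.factorial * ((m + 1).factorial * pN (m + 1) n) * (m + 1) := by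
          gcongr; exact h3.trans (Nat.mul_le_mul_left _ h1)
      _ = _ := by rw [Nat.factorial_succ m]; ring
  simpa using (by exact_mod_cast h4 : (n : ℝ) ^ m * ((m + 1 : ℕ) : ℝ) ≤
    ((m + 1).factorial : ℝ) ^ 2 * pN (m + 1) n)

lemma lower_bound (N : ℕ) (hN : 1 ≤ N) (lam : ℝ) (hl : 0 < lam) (n : ℕ) (hn : 0 < n)
    (h : (n : ℝ) = lam * (N : ℝ) ^ 2) :
    Real.exp (-2) * Real.exp ((2 + Real.log lam) * N) / (lam * (N : ℝ) ^ 2) ≤ (pN N n : ℝ) := by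
  have hN0 : (0 : ℝ) < N := by exact_mod_cast hN
  have hn0 : (0 : ℝ) < n := by exact_mod_cast hn
  have h1 := pN_lower N hN n hn
  have h2 := factorial_sq_le N hN
  have h3 : (n : ℝ) ^ (N - 1) * N ≤
      Real.exp 2 * N * ((N : ℝ) ^ N / Real.exp N) ^ 2 * pN N n := h1.trans (by gcongr)
  have hlam : Real.exp (Real.log lam * N) = (n : ℝ) ^ N / ((N : ℝ) ^ N) ^ 2 := by
    rw [mul_comm, Real.exp_nat_mul, Real.exp_log hl, h, mul_pow]
    field_simp
    ring
  have h4 : (n : ℝ) ^ N = (n : ℝ) ^ (N - 1) * n := by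
    rw [← pow_succ, Nat.sub_add_cancel hN]
  rw [← h, div_le_iff₀ hn0, add_mul, Real.exp_add, hlam, h4, Real.exp_neg, mul_comm (2 : ℝ) N,
    Real.exp_mul, Real.rpow_ofNat]
  rw [div_pow] at h3
  have h5 : (n : ℝ) ^ (N - 1) ≤ Real.exp 2 * (((N : ℝ) ^ N) ^ 2 / Real.exp N ^ 2) * pN N n := by
    refine le_of_mul_le_mul_right (h3.trans (le_of_eq ?_)) hN0
    ring
  calc _ = (Real.exp 2)⁻¹ * Real.exp N ^ 2 / ((N : ℝ) ^ N) ^ 2 * n * (n : ℝ) ^ (N - 1) := by ring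
    _ ≤ (Real.exp 2)⁻¹ * Real.exp N ^ 2 / ((N : ℝ) ^ N) ^ 2 * n *
        (Real.exp 2 * (((N : ℝ) ^ N) ^ 2 / Real.exp N ^ 2) * pN N n) := by gcongr
    _ = _ := by
      have := Real.exp_pos 2
      have := Real.exp_pos N
      field_simp

/-! ### The generating function of partitions with bounded parts -/

open PowerSeries in
/-- Absolute convergence of the power series `G` at the point `z`. -/
def AbsConv (z : ℂ) (G : PowerSeries ℂ) : Prop := Summable fun n => ‖coeff n G * z ^ n‖

open PowerSeries in
/-- The value of the power series `G` at `z`; it is the junk value `0` where the series diverges,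
and is used only at points satisfying `AbsConv z G`. -/
def psVal (z : ℂ) (G : PowerSeries ℂ) : ℂ := ∑' n, coeff n G * z ^ n

open PowerSeries in
lemma coeff_mul_mul_pow (z : ℂ) (G H : PowerSeries ℂ) (n : ℕ) :
    coeff n (G * H) * z ^ n =
      ∑ kl ∈ antidiagonal n, (coeff kl.1 G * z ^ kl.1) * (coeff kl.2 H * z ^ kl.2) := by
  rw [coeff_mul, sum_mul]
  refine sum_congr rfl fun kl hkl => ?_
  rw [← mem_antidiagonal.1 hkl, pow_add]
  ring

open PowerSeries in
lemma AbsConv.mul {z : ℂ} {G H : PowerSeries ℂ} (hG : AbsConv z G) (hH : AbsConv z H) :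
    AbsConv z (G * H) := by
  unfold AbsConv
  simp_rw [coeff_mul_mul_pow]
  exact summable_norm_sum_mul_antidiagonal_of_summable_norm
    (f := fun n => coeff n G * z ^ n) (g := fun n => coeff n H * z ^ n) hG hH

lemma psVal_mul {z : ℂ} {G H : PowerSeries ℂ} (hG : AbsConv z G) (hH : AbsConv z H) :
    psVal z (G * H) = psVal z G * psVal z H := by
  unfold psVal
  simp_rw [coeff_mul_mul_pow]
  exact (tsum_mul_tsum_eq_tsum_sum_antidiagonal_of_summable_norm hG hH).symm

open PowerSeries in
lemma absConv_of_bounded {z : ℂ} (hz : ‖z‖ < 1) {G : PowerSeries ℂ} (C : ℝ)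
    (h : ∀ n, ‖coeff n G‖ ≤ C) : AbsConv z G := by
  refine Summable.of_nonneg_of_le (fun _ => norm_nonneg _) (fun n => ?_)
    ((summable_geometric_of_lt_one (norm_nonneg z) hz).mul_left C)
  rw [norm_mul, norm_pow]
  exact mul_le_mul_of_nonneg_right (h n) (by positivity)

open PowerSeries in
lemma absConv_one_sub {z : ℂ} (hz : ‖z‖ < 1) (k : ℕ) :
    AbsConv z (1 - X ^ k : PowerSeries ℂ) := by
  refine absConv_of_bounded hz 2 fun n => ?_
  rw [map_sub, coeff_X_pow, coeff_one]
  refine (norm_sub_le _ _).trans ?_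
  split_ifs <;> norm_num

open PowerSeries in
lemma psVal_one (z : ℂ) : psVal z 1 = 1 := by
  unfold psVal
  rw [tsum_eq_single 0]
  · simp
  · intro n hn; simp [coeff_one, hn]

open PowerSeries in
lemma psVal_one_sub {z : ℂ} {k : ℕ} (hk : 0 < k) :
    psVal z (1 - X ^ k : PowerSeries ℂ) = 1 - z ^ k := by
  unfold psVal
  rw [tsum_eq_sum (s := {0, k})]
  · rw [sum_pair hk.ne]
    simp [coeff_X_pow, coeff_one, hk.ne']
    ring
  · intro n hn
    simp only [mem_insert, mem_singleton, not_or] at hn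
    simp [coeff_X_pow, coeff_one, hn.1, hn.2]

open PowerSeries in
/-- The geometric series: `∑ X ^ (k j)` is the inverse of `1 - X ^ k`. -/
lemma mk_dvd_mul (k : ℕ) (hk : 0 < k) :
    (mk fun n => if k ∣ n then (1 : ℂ) else 0) * (1 - X ^ k) = 1 := by
  ext n
  rw [mul_sub, mul_one, map_sub, coeff_mul_X_pow', coeff_mk, coeff_one]
  rcases Nat.eq_zero_or_pos n with rfl | hn
  · simp [hk.ne']
  by_cases h : k ≤ n
  · have : k ∣ n - k ↔ k ∣ n := Nat.dvd_sub_iff_left h dvd_rfl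
    simp [h, hn.ne', this]
  · have : ¬ k ∣ n := fun hd => h (Nat.le_of_dvd hn hd)
    simp [h, hn.ne', this]

/-- The generating function of partitions into parts of size at most `K`. -/
def boundedGF (K : ℕ) : PowerSeries ℂ :=
  PowerSeries.mk fun n => ((Nat.Partition.restricted n (· ≤ K)).card : ℂ)

open PowerSeries PowerSeries.WithPiTopology in
lemma boundedGF_eq (K : ℕ) :
    boundedGF K = ∏ i ∈ range K, mk fun n => if (i + 1) ∣ n then (1 : ℂ) else 0 := by
  have h1 := Nat.Partition.hasProd_powerSeriesMk_card_restricted ℂ (· ≤ K)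
  have h2 := hasProd_prod_of_ne_finset_one (L := SummationFilter.unconditional ℕ) (s := range K)
    (f := fun i => if i + 1 ≤ K then ∑' j : ℕ, (X : PowerSeries ℂ) ^ ((i + 1) * j) else 1)
    (by intro i hi; rw [if_neg (by simpa using hi)])
  rw [boundedGF, h1.unique h2]
  refine prod_congr rfl fun i hi => ?_
  rw [if_pos (by simpa using hi)]
  have h3 := tsum_pow_mul_one_sub_of_constantCoeff_eq_zero (f := (X : PowerSeries ℂ) ^ (i + 1))
    (by simp)
  simp_rw [← pow_mul] at h3
  have h4 := mk_dvd_mul (i + 1) (Nat.succ_pos i)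
  exact left_inv_eq_right_inv h3 (by rw [mul_comm]; exact h4)

open PowerSeries in
lemma boundedGF_absConv_val {z : ℂ} (hz : ‖z‖ < 1) (K : ℕ) :
    AbsConv z (boundedGF K) ∧ psVal z (boundedGF K) = ∏ i ∈ range K, (1 - z ^ (i + 1))⁻¹ := by
  rw [boundedGF_eq]
  induction K with
  | zero =>
    simp only [range_zero, prod_empty]
    refine ⟨absConv_of_bounded hz 1 fun n => ?_, psVal_one z⟩
    rw [coeff_one]; split_ifs <;> simp
  | succ K ih =>
    have hg : AbsConv z (mk fun n => if (K + 1) ∣ n then (1 : ℂ) else 0) := by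
      refine absConv_of_bounded hz 1 fun n => ?_
      rw [coeff_mk]; split_ifs <;> simp
    rw [prod_range_succ, prod_range_succ]
    refine ⟨ih.1.mul hg, ?_⟩
    rw [psVal_mul ih.1 hg, ih.2]
    congr 1
    refine eq_inv_of_mul_eq_one_left ?_
    rw [← psVal_one_sub (Nat.succ_pos K), ← psVal_mul hg (absConv_one_sub hz _),
      mk_dvd_mul _ (Nat.succ_pos K), psVal_one]

open MeasureTheory Complex in
/-- On the unit circle the `n`-th coefficient of an absolutely convergent series is a Fourier
coefficient of its sum, hence is bounded by the mean of the modulus. -/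
lemma norm_coeff_le_integral {a : ℕ → ℂ} (ha : Summable fun m => ‖a m‖) (n : ℕ) :
    2 * Real.pi * ‖a n‖ ≤
      ∫ θ in (-Real.pi)..Real.pi, ‖∑' m, a m * exp ((θ : ℂ) * I) ^ m‖ := by
  let f : ℕ → C(ℝ, ℂ) := fun m =>
    ⟨fun θ => a m * exp ((θ : ℂ) * I) ^ m * exp (-((n : ℂ) * I * θ)), by fun_prop⟩
  have hnorm : ∀ m θ, ‖f m θ‖ = ‖a m‖ := by
    intro m θ
    have h2 : -((n : ℂ) * I * θ) = ((-(n * θ) : ℝ) : ℂ) * I := by push_cast; ring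
    simp only [f, ContinuousMap.coe_mk, norm_mul, norm_pow, norm_exp_ofReal_mul_I, one_pow,
      mul_one]
    rw [h2, norm_exp_ofReal_mul_I, mul_one]
  have hs := intervalIntegral.hasSum_intervalIntegral_of_summable_norm
    (a := -Real.pi) (b := Real.pi) (f := f) (by
      refine Summable.of_nonneg_of_le (fun _ => norm_nonneg _) (fun m => ?_) ha
      rw [ContinuousMap.norm_le _ (norm_nonneg _)]
      intro x
      exact (hnorm m x).le)
  have hint : ∀ m, ∫ θ in (-Real.pi)..Real.pi, f m θ = if m = n then 2 * Real.pi * a n else 0 := by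
    intro m
    have hf : ∀ θ : ℝ, f m θ = a m * exp (((m : ℂ) - n) * I * θ) := by
      intro θ
      simp only [f, ContinuousMap.coe_mk]
      rw [← exp_nat_mul, mul_assoc, ← exp_add]
      congr 2; ring
    simp_rw [hf]
    split_ifs with h
    · subst h
      simp only [sub_self, zero_mul, exp_zero, mul_one, intervalIntegral.integral_const,
        real_smul]
      push_cast
      ring
    · have hne : ((m : ℂ) - n) * I ≠ 0 :=
        mul_ne_zero (sub_ne_zero.2 (by exact_mod_cast h)) I_ne_zero
      rw [intervalIntegral.integral_const_mul, integral_exp_mul_complex hne]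
      have : exp (((m : ℂ) - n) * I * (Real.pi : ℝ)) =
          exp (((m : ℂ) - n) * I * ((-Real.pi : ℝ) : ℂ)) := by
        rw [exp_eq_exp_iff_exists_int]
        refine ⟨(m : ℤ) - n, ?_⟩
        push_cast; ring
      rw [this]; simp
  simp_rw [hint] at hs
  have h1 := hs.unique (hasSum_ite_eq n (2 * Real.pi * a n : ℂ))
  have h2 : 2 * Real.pi * ‖a n‖ = ‖∫ θ in (-Real.pi)..Real.pi, ∑' m, f m θ‖ := by
    rw [h1]; simp [abs_of_pos Real.pi_pos]
  rw [h2]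
  refine (intervalIntegral.norm_integral_le_integral_norm (by linarith [Real.pi_pos])).trans
    (le_of_eq ?_)
  congr 1
  ext θ
  simp only [f, ContinuousMap.coe_mk]
  have h3 : -((n : ℂ) * I * θ) = ((-(n * θ) : ℝ) : ℂ) * I := by push_cast; ring
  rw [tsum_mul_right, norm_mul, h3, norm_exp_ofReal_mul_I, mul_one]

open Complex in
/-- Every part of a partition of `n` is at most `n`, so for `n ≤ K` the coefficient of `X ^ n` in
the generating function with parts at most `K` counts all partitions of `n`. -/
lemma pN_le_integral (N n K : ℕ) (hK : n ≤ K) {q : ℝ} (hq0 : 0 < q) (hq1 : q < 1) :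
    2 * Real.pi * (pN N n * q ^ n) ≤ ∫ θ in (-Real.pi)..Real.pi,
      ∏ i ∈ range K, ‖(1 - ((q : ℂ) * exp ((θ : ℂ) * I)) ^ (i + 1))⁻¹‖ := by
  have hz : ∀ θ : ℝ, ‖(q : ℂ) * exp ((θ : ℂ) * I)‖ < 1 := by
    intro θ
    rw [norm_mul, norm_exp_ofReal_mul_I, mul_one, norm_real, Real.norm_of_nonneg hq0.le]
    exact hq1
  have hsum : AbsConv (q : ℂ) (boundedGF K) :=
    (boundedGF_absConv_val (by simpa [abs_of_pos hq0] using hq1) K).1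
  have h := norm_coeff_le_integral hsum n
  have hle : (pN N n : ℝ) * q ^ n ≤ ‖PowerSeries.coeff n (boundedGF K) * (q : ℂ) ^ n‖ := by
    rw [norm_mul, norm_pow, norm_real, Real.norm_of_nonneg hq0.le, boundedGF,
      PowerSeries.coeff_mk, norm_natCast]
    gcongr
    refine Finset.card_le_card fun p _ => ?_
    rw [Nat.Partition.restricted, mem_filter]
    exact ⟨mem_univ _, fun i hi => (p.le_of_mem_parts hi).trans hK⟩
  refine (mul_le_mul_of_nonneg_left hle (by positivity)).trans (h.trans (le_of_eq ?_))
  congr 1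
  ext θ
  rw [← norm_prod, ← (boundedGF_absConv_val (hz θ) K).2, psVal]
  congr 2
  ext m
  rw [mul_pow, mul_assoc]

/-! ### Size of the product on a circle -/

open Complex in
/-- Each term `(‖w‖ ^ m - Re (w ^ m)) / m` in the expansion of
`log ‖1 - w‖ - log (1 - ‖w‖)` is nonnegative; the bound keeps only the term `m = 1`. -/
lemma norm_inv_one_sub_le {w : ℂ} (hw : ‖w‖ < 1) :
    ‖(1 - w)⁻¹‖ ≤ (1 - ‖w‖)⁻¹ * Real.exp (w.re - ‖w‖) := by
  have h1 := Complex.hasSum_re (Complex.hasSum_taylorSeries_neg_log' hw)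
  have h2 := Real.hasSum_pow_div_log_of_abs_lt_one (x := ‖w‖) (by rwa [abs_norm])
  have h3 := le_hasSum (h2.sub h1) 0 (by
    intro m _
    have : ((w ^ (m + 1) / ((m : ℂ) + 1)).re) ≤ ‖w‖ ^ (m + 1) / (m + 1) := by
      refine (Complex.re_le_norm _).trans (le_of_eq ?_)
      rw [norm_div, norm_pow]
      congr 1
      exact_mod_cast Complex.norm_natCast (m + 1)
    linarith)
  simp only [Complex.neg_re, Complex.log_re] at h3
  norm_num at h3
  have hw1 : 0 < 1 - ‖w‖ := by linarith
  have hne : 0 < ‖1 - w‖ := by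
    rw [norm_pos_iff, sub_ne_zero]
    rintro rfl
    simp at hw
  rw [norm_inv, ← Real.exp_log (inv_pos.2 hne), ← Real.exp_log (inv_pos.2 hw1), ← Real.exp_add,
    Real.exp_le_exp, Real.log_inv, Real.log_inv]
  linarith

/-- A second order bound for `1 / (eˣ - 1)`. The factor `e⁻ˣ` in the correction term makes
`∑ (1 / m) e^{-m t} / 2` a logarithm once it is summed over multiples `x = m t`. -/
lemma geom_bound {x : ℝ} (hx : 0 < x) :
    Real.exp (-x) / (1 - Real.exp (-x)) ≤ 1 / x - Real.exp (-x) / 2 := by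
  have h1 := Real.quadratic_le_exp_of_nonneg hx.le
  have h2 : 1 - x ≤ Real.exp (-x) := by linarith [Real.add_one_le_exp (-x)]
  have h3 : Real.exp (-x) < 1 := by simpa using hx
  have h4 : Real.exp x * Real.exp (-x) = 1 := by rw [← Real.exp_add]; simp
  set y := Real.exp (-x)
  have hy : 0 < y := Real.exp_pos _
  rw [le_sub_iff_add_le, div_add_div _ _ (by linarith) two_ne_zero, div_le_div_iff₀ (by nlinarith) hx]
  have h5 : 0 ≤ (Real.exp x - (1 + x + x ^ 2 / 2)) * y := mul_nonneg (by linarith) hy.le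
  have h6 : 0 ≤ x * y * (x - (1 - y)) := mul_nonneg (by positivity) (by linarith)
  nlinarith

/-- The logarithm of the product is `∑ₘ (1 / m) ∑ᵢ e^{-i m t}`, and `geom_bound` at `x = m t` turns
the sum over `m` into `ζ(2) / t + log (1 - e^{-t}) / 2`. The factor `√(1 - e^{-t})` is essential for
the power of `n` in the final bound. -/
lemma prod_inv_le {t : ℝ} (ht : 0 < t) (K : ℕ) :
    ∏ i ∈ range K, (1 - Real.exp (-t) ^ (i + 1))⁻¹ ≤
      √(1 - Real.exp (-t)) * Real.exp (Real.pi ^ 2 / (6 * t)) := by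
  set q := Real.exp (-t) with hq
  have hq0 : 0 < q := Real.exp_pos _
  have hq1 : q < 1 := by rw [hq]; simpa using ht
  have hqp : ∀ i : ℕ, q ^ (i + 1) < 1 := fun i => pow_lt_one₀ hq0.le hq1 (by omega)
  have h1 : HasSum (fun m : ℕ => ∑ i ∈ range K, (q ^ (i + 1)) ^ (m + 1) / ((m : ℝ) + 1))
      (∑ i ∈ range K, -Real.log (1 - q ^ (i + 1))) :=
    hasSum_sum fun i _ => Real.hasSum_pow_div_log_of_abs_lt_one (by
      rw [abs_of_pos (by positivity)]; exact hqp i)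
  have h2 : HasSum (fun m : ℕ => 1 / (((m + 1 : ℕ) : ℝ) ^ 2)) (Real.pi ^ 2 / 6) := by
    have := (hasSum_nat_add_iff' (f := fun n : ℕ => (1 : ℝ) / (n : ℝ) ^ 2) 1).2 hasSum_zeta_two
    simpa using this
  have h3 := Real.hasSum_pow_div_log_of_abs_lt_one (x := q) (by rwa [abs_of_pos hq0])
  have h4 := hasSum_le (fun m => ?_) h1 ((h2.mul_left (1 / t)).sub (h3.mul_left (1 / 2)))
  · have hpos : ∀ i ∈ range K, (0 : ℝ) < (1 - q ^ (i + 1))⁻¹ := fun i _ =>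
      inv_pos.2 (by linarith [hqp i])
    have hq2 : 0 < 1 - q := by linarith
    rw [Real.sqrt_eq_rpow, Real.rpow_def_of_pos hq2, ← Real.exp_add,
      ← Real.exp_log (prod_pos hpos), Real.exp_le_exp, Real.log_prod (fun i hi => (hpos i hi).ne')]
    simp_rw [Real.log_inv]
    refine h4.trans (le_of_eq ?_)
    field_simp
    ring
  · have hm : (0 : ℝ) < (m : ℝ) + 1 := by positivity
    have hy : q ^ (m + 1) = Real.exp (-((m + 1) * t)) := by
      rw [hq, ← Real.exp_nat_mul]; push_cast; ring_nf
    have hb := geom_bound (x := (m + 1) * t) (by positivity)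
    rw [← hy] at hb
    have hs : ∑ i ∈ range K, (q ^ (i + 1)) ^ (m + 1) ≤ q ^ (m + 1) / (1 - q ^ (m + 1)) := by
      have := (summable_geometric_of_lt_one (by positivity) (hqp m)).sum_le_tsum (range K)
        (fun i _ => by positivity)
      rw [tsum_geometric_of_lt_one (by positivity) (hqp m)] at this
      have h5 := mul_le_mul_of_nonneg_left this (show 0 ≤ q ^ (m + 1) by positivity)
      rw [mul_sum] at h5
      refine le_trans (le_of_eq (sum_congr rfl fun i _ => ?_)) h5
      rw [← pow_mul, ← pow_mul, ← pow_add]; congr 1; ring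
    rw [← sum_div, div_le_iff₀ hm]
    refine (hs.trans hb).trans (le_of_eq ?_)
    push_cast
    field_simp

/-- The last summand bounds the two tails `i ≥ K` of the geometric series. -/
lemma sum_re_le {z : ℂ} (hz0 : 0 < ‖z‖) (hz : ‖z‖ < 1) (K : ℕ) :
    ∑ i ∈ range K, ((z ^ (i + 1)).re - ‖z‖ ^ (i + 1)) ≤
      (z / (1 - z)).re - ‖z‖ / (1 - ‖z‖) + 2 * ‖z‖ ^ (K + 1) / (1 - ‖z‖) := by
  have hz1 : z ≠ 1 := by rintro rfl; simp at hz
  have h1 : ∑ i ∈ range K, z ^ (i + 1) = z / (1 - z) - z ^ (K + 1) / (1 - z) := by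
    simp_rw [pow_succ]
    rw [← sum_mul, geom_sum_eq hz1]
    have : z - 1 ≠ 0 := sub_ne_zero.2 hz1
    have : 1 - z ≠ 0 := sub_ne_zero.2 hz1.symm
    field_simp
    ring
  have h2 : ∑ i ∈ range K, ‖z‖ ^ (i + 1) = ‖z‖ / (1 - ‖z‖) - ‖z‖ ^ (K + 1) / (1 - ‖z‖) := by
    simp_rw [pow_succ]
    rw [← sum_mul, geom_sum_eq hz.ne]
    have : ‖z‖ - 1 ≠ 0 := by linarith
    have : 1 - ‖z‖ ≠ 0 := by linarith
    field_simp
    ring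
  have h3 : -(z ^ (K + 1) / (1 - z)).re ≤ ‖z‖ ^ (K + 1) / (1 - ‖z‖) := by
    refine (neg_le_abs _).trans ((Complex.abs_re_le_norm _).trans ?_)
    rw [norm_div, norm_pow]
    have : 1 - ‖z‖ ≤ ‖1 - z‖ := by simpa using norm_sub_norm_le 1 z
    have : 0 < 1 - ‖z‖ := by linarith
    gcongr
  rw [sum_sub_distrib, ← Complex.re_sum, h1, h2, Complex.sub_re]
  have h4 : 2 * ‖z‖ ^ (K + 1) / (1 - ‖z‖) = ‖z‖ ^ (K + 1) / (1 - ‖z‖) + ‖z‖ ^ (K + 1) / (1 - ‖z‖) := by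
    ring
  linarith

lemma re_div_one_sub (q θ : ℝ) (hq0 : 0 < q) (hq1 : q < 1) :
    ((q * Complex.exp (θ * Complex.I)) / (1 - q * Complex.exp (θ * Complex.I))).re - q / (1 - q) =
      -(q * (1 + q) * (1 - Real.cos θ)) /
        ((1 - q) * ((1 - q) ^ 2 + 2 * (q * (1 - Real.cos θ)))) := by
  have hc := Real.sin_sq_add_cos_sq θ
  have hc1 := Real.cos_le_one θ
  have hD : 0 < (1 - q) ^ 2 + 2 * (q * (1 - Real.cos θ)) := by
    have : 0 < 1 - q := by linarith
    have : 0 ≤ 1 - Real.cos θ := by linarith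
    positivity
  have hn : Complex.normSq (1 - q * Complex.exp (θ * Complex.I)) =
      (1 - q) ^ 2 + 2 * (q * (1 - Real.cos θ)) := by
    rw [Complex.normSq_apply]
    simp [Complex.exp_ofReal_mul_I_re, Complex.exp_ofReal_mul_I_im]
    linear_combination q ^ 2 * hc
  obtain ⟨D, hDdef⟩ : ∃ D, D = (1 - q) ^ 2 + 2 * (q * (1 - Real.cos θ)) := ⟨_, rfl⟩
  rw [← hDdef] at hn hD ⊢
  rw [Complex.div_re, hn]
  simp [Complex.exp_ofReal_mul_I_re, Complex.exp_ofReal_mul_I_im]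
  have : 1 - q ≠ 0 := by linarith
  field_simp
  have hs : Real.sin θ ^ 2 = 1 - Real.cos θ ^ 2 := by linarith
  rw [hs, hDdef]
  ring

/-- With `a = 1 - q`, the exponent is at most `-θ² / (40 a³)` for `θ` up to about `a`, and at
most `-1 / (4 a)` beyond. -/
lemma exponent_le {q θ : ℝ} (hq : 1 / 4 ≤ q) (hq1 : q < 1) (hθ : |θ| ≤ Real.pi) :
    Real.exp (-(q * (1 + q) * (1 - Real.cos θ)) /
        ((1 - q) * ((1 - q) ^ 2 + 2 * (q * (1 - Real.cos θ))))) ≤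
      Real.exp (-(1 / (40 * (1 - q) ^ 3)) * θ ^ 2) + Real.exp (-(1 / (4 * (1 - q)))) := by
  set a := 1 - q with ha
  have ha0 : 0 < a := by linarith
  set s := q * (1 - Real.cos θ) with hs
  have hs1 : θ ^ 2 / 20 ≤ s := by
    -- `1 - cos θ ≥ 2 θ² / π²` and `π² ≤ 10`
    have h1 := Real.cos_le_one_sub_mul_cos_sq hθ
    have h2 : Real.pi ^ 2 ≤ 10 := by nlinarith [Real.pi_lt_d2, Real.pi_gt_three]
    have h3 : (1 : ℝ) / 5 ≤ 2 / Real.pi ^ 2 := by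
      rw [div_le_div_iff₀ (by norm_num) (by positivity)]; linarith
    have h4 : θ ^ 2 / 5 ≤ 1 - Real.cos θ := by nlinarith [sq_nonneg θ]
    nlinarith [sq_nonneg θ]
  have hs0 : 0 ≤ s := le_trans (by positivity) hs1
  have h1 : -(q * (1 + q) * (1 - Real.cos θ)) / (a * (a ^ 2 + 2 * s)) ≤
      -(s / (a * (a ^ 2 + 2 * s))) := by
    rw [← neg_div]
    gcongr
    have : 0 ≤ q * s := by positivity
    linarith
  refine (Real.exp_le_exp.2 h1).trans ?_
  rcases le_total (2 * s) (a ^ 2) with h | h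
  · refine le_add_of_le_of_nonneg (Real.exp_le_exp.2 ?_) (Real.exp_pos _).le
    rw [neg_mul, neg_le_neg_iff, one_div_mul_eq_div, div_le_div_iff₀ (by positivity) (by positivity)]
    have e1 : a * (a ^ 2 + 2 * s) ≤ a * (2 * a ^ 2) := by gcongr; linarith
    calc θ ^ 2 * (a * (a ^ 2 + 2 * s)) ≤ (20 * s) * (a * (2 * a ^ 2)) := by
          gcongr; linarith
      _ = _ := by ring
  · refine le_add_of_nonneg_of_le (Real.exp_pos _).le (Real.exp_le_exp.2 ?_)
    rw [neg_le_neg_iff, div_le_div_iff₀ (by positivity) (by positivity)]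
    nlinarith

/-! ### Upper bound: the saddle point -/

/-- The Gaussian contributes `√(40 π a³)`; the constant term is smaller than any power of `a`. -/
lemma integral_majorant_le {a : ℝ} (ha : 0 < a) (ha1 : a ≤ 1) :
    ∫ θ in (-Real.pi)..Real.pi,
      (Real.exp (-(1 / (40 * a ^ 3)) * θ ^ 2) + Real.exp (-(1 / (4 * a)))) ≤ 236 * (a * √a) := by
  have hb : 0 < 1 / (40 * a ^ 3) := by positivity
  have hint := integrable_exp_neg_mul_sq hb
  have hsa : 0 ≤ √a := Real.sqrt_nonneg a
  rw [intervalIntegral.integral_add hint.intervalIntegrable (by simp),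
    intervalIntegral.integral_const]
  have h1 : ∫ θ in (-Real.pi)..Real.pi, Real.exp (-(1 / (40 * a ^ 3)) * θ ^ 2) ≤
      12 * (a * √a) := by
    rw [intervalIntegral.integral_of_le (by linarith [Real.pi_pos])]
    refine (MeasureTheory.setIntegral_le_integral hint
      (Filter.Eventually.of_forall fun _ => (Real.exp_pos _).le)).trans ?_
    rw [integral_gaussian, Real.sqrt_le_left (by positivity), mul_pow, mul_pow,
      Real.sq_sqrt ha.le, div_div_eq_mul_div, div_one]
    have : Real.pi ≤ 3.6 := by linarith [Real.pi_lt_d2]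
    calc Real.pi * (40 * a ^ 3) ≤ 3.6 * (40 * a ^ 3) := by gcongr
      _ = _ := by ring
  have h2 : Real.exp (-(1 / (4 * a))) ≤ 32 * (a * √a) := by
    have h3 := Real.quadratic_le_exp_of_nonneg (x := 1 / (4 * a)) (by positivity)
    have h4 : 1 / (32 * a ^ 2) ≤ Real.exp (1 / (4 * a)) := by
      refine le_trans ?_ h3
      have : 1 / (32 * a ^ 2) = (1 / (4 * a)) ^ 2 / 2 := by field_simp; norm_num
      rw [this]
      have : 0 ≤ 1 / (4 * a) := by positivity
      linarith
    rw [Real.exp_neg]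
    refine (inv_le_of_inv_le₀ (by positivity) ?_).trans (b := 32 * a ^ 2) ?_
    · rwa [← one_div]
    · rw [sq]
      have : a ≤ √a := Real.le_sqrt_of_sq_le (by nlinarith)
      gcongr
  have h3 : (Real.pi - -Real.pi) • Real.exp (-(1 / (4 * a))) ≤ 7 * (32 * (a * √a)) := by
    rw [smul_eq_mul]
    have : Real.pi - -Real.pi ≤ 7 := by linarith [Real.pi_lt_d2]
    gcongr
  linarith

lemma norm_boundedProd_le {q : ℝ} (hq : 1 / 4 ≤ q) (hq1 : q < 1) {K : ℕ}
    (hK : 2 * q ^ (K + 1) / (1 - q) ≤ 1) {θ : ℝ} (hθ : |θ| ≤ Real.pi) :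
    ∏ i ∈ range K, ‖(1 - ((q : ℂ) * Complex.exp ((θ : ℂ) * Complex.I)) ^ (i + 1))⁻¹‖ ≤
      (∏ i ∈ range K, (1 - q ^ (i + 1))⁻¹) * Real.exp 1 *
        (Real.exp (-(1 / (40 * (1 - q) ^ 3)) * θ ^ 2) + Real.exp (-(1 / (4 * (1 - q))))) := by
  have hq0 : 0 < q := by linarith
  set z := (q : ℂ) * Complex.exp ((θ : ℂ) * Complex.I) with hz
  have hnz : ‖z‖ = q := by
    rw [hz, norm_mul, Complex.norm_exp_ofReal_mul_I, mul_one, Complex.norm_real,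
      Real.norm_of_nonneg hq0.le]
  have h1 : ∏ i ∈ range K, ‖(1 - z ^ (i + 1))⁻¹‖ ≤
      ∏ i ∈ range K, ((1 - q ^ (i + 1))⁻¹ * Real.exp ((z ^ (i + 1)).re - q ^ (i + 1))) := by
    refine prod_le_prod (fun _ _ => norm_nonneg _) fun i _ => ?_
    have hni : ‖z ^ (i + 1)‖ = q ^ (i + 1) := by rw [norm_pow, hnz]
    have := norm_inv_one_sub_le (w := z ^ (i + 1))
      (by rw [hni]; exact pow_lt_one₀ hq0.le hq1 (by omega))
    rwa [hni] at this
  rw [prod_mul_distrib, ← Real.exp_sum] at h1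
  have h2 := sum_re_le (z := z) (by rw [hnz]; exact hq0) (by rw [hnz]; exact hq1) K
  rw [hnz, hz, re_div_one_sub q θ hq0 hq1, ← hz] at h2
  have hpos : 0 ≤ ∏ i ∈ range K, (1 - q ^ (i + 1))⁻¹ := prod_nonneg fun i _ =>
    inv_nonneg.2 (by linarith [pow_lt_one₀ hq0.le hq1 (show i + 1 ≠ 0 by omega)])
  refine h1.trans ?_
  rw [mul_assoc]
  refine mul_le_mul_of_nonneg_left ?_ hpos
  refine (Real.exp_le_exp.2 (h2.trans (add_le_add_right hK _))).trans ?_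
  rw [Real.exp_add, mul_comm]
  exact mul_le_mul_of_nonneg_left (exponent_le hq hq1 hθ) (Real.exp_pos _).le

/-- The restriction `t ≤ 1.3` serves to give `e^{-t} ≥ 1 / 4`; it holds at the saddle point for
every `n ≥ 1`. -/
lemma pN_mul_pow_le (N n : ℕ) {t : ℝ} (ht : 0 < t) (ht1 : t ≤ 1.3) :
    2 * Real.pi * (pN N n * Real.exp (-t) ^ n) ≤
      236 * Real.exp 1 * t ^ 2 * Real.exp (Real.pi ^ 2 / (6 * t)) := by
  set q := Real.exp (-t) with hqt
  have hq1 : q < 1 := by rw [hqt]; simpa using ht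
  have hq : 1 / 4 ≤ q := by
    have h4 : (1 : ℝ) / 4 = Real.exp (-(2 * Real.log 2)) := by
      rw [Real.exp_neg, mul_comm, Real.exp_mul, Real.exp_log two_pos]; norm_num
    rw [h4, hqt, Real.exp_le_exp]
    linarith [Real.log_two_gt_d9]
  have hq0 : 0 < q := by linarith
  have ha : 0 < 1 - q := by linarith
  obtain ⟨K, hnK, hK⟩ : ∃ K, n ≤ K ∧ 2 * q ^ (K + 1) / (1 - q) ≤ 1 := by
    have h1 : Filter.Tendsto (fun K : ℕ => 2 * q ^ (K + 1) / (1 - q)) Filter.atTop (nhds 0) := by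
      have := ((((tendsto_pow_atTop_nhds_zero_of_lt_one hq0.le hq1).comp
        (Filter.tendsto_add_atTop_nat 1)).const_mul 2).div_const (1 - q))
      simpa using this
    exact ((Filter.eventually_ge_atTop n).and (h1.eventually_le_const one_pos)).exists
  refine (pN_le_integral N n K hnK hq0 hq1).trans ?_
  -- `K` is now so large that truncating the product costs at most a factor `e`.
  have hcont : Continuous fun θ : ℝ =>
      ∏ i ∈ range K, ‖(1 - ((q : ℂ) * Complex.exp ((θ : ℂ) * Complex.I)) ^ (i + 1))⁻¹‖ := by
    refine continuous_finsetProd _ fun i _ => Continuous.norm (Continuous.inv₀ (by fun_prop) ?_)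
    intro θ h
    have h2 := congrArg norm (sub_eq_zero.1 h)
    rw [norm_one, norm_pow, norm_mul, Complex.norm_exp_ofReal_mul_I, mul_one, Complex.norm_real,
      Real.norm_of_nonneg hq0.le] at h2
    linarith [pow_lt_one₀ hq0.le hq1 (show i + 1 ≠ 0 by omega)]
  have hcont2 : Continuous fun θ : ℝ => (∏ i ∈ range K, (1 - q ^ (i + 1))⁻¹) * Real.exp 1 *
      (Real.exp (-(1 / (40 * (1 - q) ^ 3)) * θ ^ 2) + Real.exp (-(1 / (4 * (1 - q))))) := by
    fun_prop
  have hmono := intervalIntegral.integral_mono_on (a := -Real.pi) (b := Real.pi)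
    (by linarith [Real.pi_pos]) (hcont.intervalIntegrable (μ := MeasureTheory.volume) _ _)
    (hcont2.intervalIntegrable _ _)
    (fun θ hθ => norm_boundedProd_le hq hq1 hK (abs_le.2 hθ))
  refine hmono.trans ?_
  rw [intervalIntegral.integral_const_mul]
  have hat : 1 - q ≤ t := by
    rw [hqt]; linarith [Real.add_one_le_exp (-t)]
  have hF := prod_inv_le ht K
  rw [← hqt] at hF
  calc _ ≤ √(1 - q) * Real.exp (Real.pi ^ 2 / (6 * t)) * Real.exp 1 *
        (236 * ((1 - q) * √(1 - q))) := by
        gcongr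
        · refine intervalIntegral.integral_nonneg (by linarith [Real.pi_pos]) fun θ _ => ?_
          positivity
        · exact integral_majorant_le ha (by linarith)
    _ = 236 * Real.exp 1 * ((1 - q) * √(1 - q) ^ 2) * Real.exp (Real.pi ^ 2 / (6 * t)) := by ring
    _ = 236 * Real.exp 1 * (1 - q) ^ 2 * Real.exp (Real.pi ^ 2 / (6 * t)) := by
        rw [Real.sq_sqrt ha.le]; ring
    _ ≤ _ := by gcongr

lemma upper_bound (N n : ℕ) (hn : 0 < n) :
    (pN N n : ℝ) ≤
      236 * Real.exp 1 * Real.pi / 12 * Real.exp (2 * Real.pi * √((n : ℝ) / 6)) / n := by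
  have hn1 : (1 : ℝ) ≤ n := by exact_mod_cast hn
  have hn0 : (0 : ℝ) < n := by linarith
  set u := √((n : ℝ) / 6) with hu
  have hu0 : 0 < u := Real.sqrt_pos.2 (by positivity)
  have husq : u ^ 2 = n / 6 := Real.sq_sqrt (by positivity)
  -- The saddle point `t = π / √(6 n)` minimises `n t + π² / (6 t)`.
  set t := Real.pi / (6 * u) with ht
  have ht0 : 0 < t := by positivity
  have ht1 : t ≤ 1.3 := by
    rw [ht, div_le_iff₀ (by positivity)]
    have : (0.408 : ℝ) ≤ u := Real.le_sqrt_of_sq_le (by linarith)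
    linarith [Real.pi_lt_d2]
  have h := pN_mul_pow_le N n ht0 ht1
  have e1 : Real.exp (-t) ^ n = Real.exp (-(Real.pi * u)) := by
    rw [← Real.exp_nat_mul]
    congr 1
    have : (n : ℝ) = 6 * u ^ 2 := by linarith
    rw [this, ht]
    field_simp
  have e2 : Real.pi ^ 2 / (6 * t) = Real.pi * u := by
    rw [ht]
    have := Real.pi_pos
    field_simp
  have e3 : t ^ 2 = Real.pi ^ 2 / (6 * n) := by
    rw [ht, div_pow, mul_pow, husq]; ring
  have e4 : Real.exp (2 * Real.pi * u) = Real.exp (Real.pi * u) * Real.exp (Real.pi * u) := by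
    rw [← Real.exp_add]; congr 1; ring
  rw [e1, e2, e3, Real.exp_neg] at h
  rw [e4]
  have hE := Real.exp_pos (Real.pi * u)
  have hpi := Real.pi_pos
  set E := Real.exp (Real.pi * u)
  calc (pN N n : ℝ) = 2 * Real.pi * (pN N n * E⁻¹) * (E / (2 * Real.pi)) := by field_simp
    _ ≤ 236 * Real.exp 1 * (Real.pi ^ 2 / (6 * n)) * E * (E / (2 * Real.pi)) := by gcongr
    _ = _ := by field_simp; norm_num

/-- **Lemma 8.1**: for positive integers `N`, `λN²`,
`e^{(2+log λ)N}/(λN²) ≪ p_N(λN²) ≪ e^{2π√(λ/6)N}/(λN²)` with absolute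
implied constants. -/
theorem pN_lambda_Nsq_bounds :
    ∃ c C : ℝ, 0 < c ∧ 0 < C ∧
      ∀ N : ℕ, 1 ≤ N → ∀ lam : ℝ, 0 < lam → ∀ n : ℕ, 0 < n →
        (n : ℝ) = lam * (N : ℝ) ^ 2 →
          c * Real.exp ((2 + Real.log lam) * N) / (lam * (N : ℝ) ^ 2) ≤ (pN N n : ℝ) ∧
          (pN N n : ℝ) ≤
            C * Real.exp (2 * Real.pi * Real.sqrt (lam / 6) * N) / (lam * (N : ℝ) ^ 2) := by
  refine ⟨Real.exp (-2), 236 * Real.exp 1 * Real.pi / 12, Real.exp_pos _, by positivity, ?_⟩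
  intro N hN lam hl n hn h
  refine ⟨lower_bound N hN lam hl n hn h, (upper_bound N n hn).trans (le_of_eq ?_)⟩
  have hsq : √((n : ℝ) / 6) = √(lam / 6) * N := by
    rw [h, show lam * (N : ℝ) ^ 2 / 6 = lam / 6 * (N : ℝ) ^ 2 by ring,
      Real.sqrt_mul (by positivity), Real.sqrt_sq (by positivity)]
  rw [hsq, h, mul_assoc (2 * Real.pi)]

end
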